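/- Let n, m ≥ 1 and let u = (u_1,…,u_m) be an m-tuple of C² functions u_i : ℝⁿ → ℝ solving the prescribed mean curvature system −div(∇u_i/√(1+|∇u_i|²)) = H_i(u) on ℝⁿ for every i. Write x = (x', x_n) ∈ ℝ^{n−1} × ℝ. Assume: (i) for every x_n the function x' ↦ ∑_{i=1}^m (1 + |∇_{x'}u_i|² − √(1+|∇u_i|²))/√(1+|∇u_i|²) − H̃(u) is integrable over ℝ^{n−1}, so that its integral G(x_n) (as a limit over balls B_R(0) ⊂ ℝ^{n−1}) exists and is finite; (ii) differentiation under the integral sign in x_n is justified for each truncated integral over B_R(0); and (iii) for every x_n there is a sequence R_k → ∞ along which ∫_0^{x_n} ∫_{∂B_{R_k}(0)⊂ℝ^{n−1}} ∑_{i=1}^m (∂_{ν_{x'}}u_i)(∂_{x_n}u_i)/√(1+|∇u_i|²) dS(x') dt → 0. Then G(x_n) is constant in x_n: ∫_{ℝ^{n−1}} ( ∑_{i=1}^m (1 + |∇_{x'}u_i|² − √(1+|∇u_i|²))/√(1+|∇u_i|²) − H̃(u) ) dx' ≡ C. -/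

import Mathlib

open MeasureTheory Metric Finset Filter
open scoped RealInnerProductSpace

noncomputable section

/-- Divergence of a vector field on Euclidean space. -/
def vdiv {N : ℕ} (F : EuclideanSpace ℝ (Fin N) → EuclideanSpace ℝ (Fin N))
    (x : EuclideanSpace ℝ (Fin N)) : ℝ :=
  ∑ i, fderiv ℝ F x (EuclideanSpace.single i 1) i

/-- The point `(x', t) ∈ ℝ^{n} × ℝ = ℝ^{n+1}`. -/
def emb {n : ℕ} (x' : EuclideanSpace ℝ (Fin n)) (t : ℝ) : EuclideanSpace ℝ (Fin (n + 1)) :=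
  (EuclideanSpace.equiv (Fin (n + 1)) ℝ).symm (Fin.snoc (fun j => x' j) t)

/-- The integrand of the Hamiltonian for the prescribed mean curvature system:
`∑ᵢ (1 + |∇_{x'}uᵢ|² - √(1+|∇uᵢ|²))/√(1+|∇uᵢ|²) - H̃(u)` evaluated at `(x', t)`. -/
def mcIntegrand {n m : ℕ} (Ht : (Fin m → ℝ) → ℝ)
    (u : Fin m → EuclideanSpace ℝ (Fin (n + 1)) → ℝ)
    (x' : EuclideanSpace ℝ (Fin n)) (t : ℝ) : ℝ :=
  (∑ i, (1 + ‖gradient (fun y => u i (emb y t)) x'‖ ^ 2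
          - Real.sqrt (1 + ‖gradient (u i) (emb x' t)‖ ^ 2))
        / Real.sqrt (1 + ‖gradient (u i) (emb x' t)‖ ^ 2))
    - Ht (fun j => u j (emb x' t))

open scoped Topology Pointwise

/-
The system is the Euler–Lagrange system of the Lagrangian `∑ᵢ √(1 + |∇uᵢ|²) - H̃(u)`, so Noether's
theorem for translations in `xₙ` says that the `xₙ`-derivative of the Lagrangian is the divergence
of the momentum density `∑ᵢ (∂ₙuᵢ) ∇uᵢ / √(1 + |∇uᵢ|²)`. Moving the last component of the momentum
to the other side, the `xₙ`-derivative of the integrand becomes the horizontal divergence of the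
horizontal momentum. Integrating over `B_R × [0, xₙ]` leaves the flux through `∂B_R`, which tends
to zero along the given radii.

The flux is measured by the Hausdorff measure of the sphere. Integrating the divergence of
`max(0, R² - |x|²)² F` over the space and using polar coordinates gives the divergence theorem on
balls for the cone measure on the sphere. Both this measure and the Hausdorff measure give equal
mass to balls of equal radius centred on the sphere, so they are proportional; the constant of
proportionality is irrelevant, as the flux tends to zero.
-/

section UniformlyDistributed

variable {X : Type*} [PseudoMetricSpace X] [MeasurableSpace X] {μ ν : Measure X}

/-- A measure on a metric space is uniformly distributed if all balls of the same radius have the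
same mass. This is how the two surface measures on the sphere are compared. -/
def IsUniformlyDistributed (μ : Measure X) : Prop :=
  ∀ (x y : X) (r : ℝ), μ (ball x r) = μ (ball y r)

namespace IsUniformlyDistributed

theorem of_forall_exists_measurePreserving [OpensMeasurableSpace X]
    (h : ∀ x y : X, ∃ e : X ≃ᵢ X, e x = y ∧ MeasurePreserving e μ μ) :
    IsUniformlyDistributed μ := by
  intro x y r
  obtain ⟨e, rfl, he⟩ := h x y
  rw [← he.measure_preimage measurableSet_ball.nullMeasurableSet (s := ball (e x) r),
    e.preimage_ball, e.symm_apply_apply]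

theorem measure_ball_pos [CompactSpace X] (hν : IsUniformlyDistributed ν) (hν0 : ν ≠ 0) (x : X)
    {r : ℝ} (hr : 0 < r) : 0 < ν (ball x r) := by
  refine pos_iff_ne_zero.2 fun hx => hν0 (Measure.measure_univ_eq_zero.1 ?_)
  refine isCompact_univ.measure_zero_of_nhdsWithin fun y _ => ?_
  exact ⟨ball y r, mem_nhdsWithin_of_mem_nhds (ball_mem_nhds y hr), (hν y x r).trans hx⟩

end IsUniformlyDistributed

variable [CompactSpace X] [OpensMeasurableSpace X] {f : X → ℝ}

theorem exists_forall_abs_setIntegral_ball_sub_le (hf : Continuous f) {ε : ℝ} (hε : 0 < ε) :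
    ∃ r > 0, ∀ (ν : Measure X) [IsFiniteMeasure ν] (x : X),
      |(∫ y in ball x r, f y ∂ν) - ν.real (ball x r) * f x| ≤ ε * ν.real (ball x r) := by
  obtain ⟨r, hr, hfr⟩ := uniformContinuous_iff.1
    (CompactSpace.uniformContinuous_of_continuous hf) ε hε
  refine ⟨r, hr, fun ν _ x => ?_⟩
  have hint : IntegrableOn f (ball x r) ν :=
    (hf.integrable_of_hasCompactSupport (.of_compactSpace f)).integrableOn
  have hsub : (∫ y in ball x r, f y ∂ν) - ν.real (ball x r) * f x
      = ∫ y in ball x r, (f y - f x) ∂ν := by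
    rw [integral_sub hint (integrable_const _), setIntegral_const, smul_eq_mul]
  rw [hsub, ← Real.norm_eq_abs]
  exact norm_setIntegral_le_of_norm_le_const (measure_lt_top _ _) fun y hy => (hfr hy).le

variable [SecondCountableTopology X] [IsFiniteMeasure μ] [IsFiniteMeasure ν]

theorem integrable_indicator_ball (hf : Continuous f) (r : ℝ) :
    Integrable (fun z : X × X => (ball z.1 r).indicator f z.2) (μ.prod ν) := by
  have hball : MeasurableSet {z : X × X | dist z.2 z.1 < r} :=
    (isOpen_lt (by fun_prop) continuous_const).measurableSet
  exact ((hf.comp continuous_snd).integrable_of_hasCompactSupport (.of_compactSpace _)).indicator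
    hball

theorem integrable_setIntegral_ball (hf : Continuous f) (r : ℝ) :
    Integrable (fun x => ∫ y in ball x r, f y ∂ν) μ := by
  simpa only [integral_indicator measurableSet_ball]
    using (integrable_indicator_ball (μ := μ) (ν := ν) hf r).integral_prod_left

theorem integral_setIntegral_ball_comm (hf : Continuous f) (r : ℝ) :
    ∫ x, ∫ y in ball x r, f y ∂ν ∂μ = ∫ y, μ.real (ball y r) * f y ∂ν := by
  calc ∫ x, ∫ y in ball x r, f y ∂ν ∂μ
      = ∫ x, ∫ y, (ball x r).indicator f y ∂ν ∂μ := by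
        simp_rw [integral_indicator measurableSet_ball]
    _ = ∫ y, ∫ x, (ball x r).indicator f y ∂μ ∂ν :=
        integral_integral_swap (integrable_indicator_ball hf r)
    _ = ∫ y, ∫ _ in ball y r, f y ∂μ ∂ν := by
        simp_rw [← integral_indicator measurableSet_ball]
        simp only [Set.indicator, mem_ball, dist_comm]
    _ = ∫ y, μ.real (ball y r) * f y ∂ν := by simp

namespace IsUniformlyDistributed

theorem integral_setIntegral_ball (hμ : IsUniformlyDistributed μ)
    (hf : Continuous f) (p : X) (r : ℝ) :
    ∫ x, ∫ y in ball x r, f y ∂ν ∂μ = μ.real (ball p r) * ∫ y, f y ∂ν := by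
  rw [integral_setIntegral_ball_comm hf, ← integral_const_mul]
  simp only [measureReal_def, hμ _ p r]

theorem measureReal_ball_mul_comm (hμ : IsUniformlyDistributed μ)
    (hν : IsUniformlyDistributed ν) (p : X) (r : ℝ) :
    ν.real (ball p r) * μ.real Set.univ = μ.real (ball p r) * ν.real Set.univ := by
  have h := hμ.integral_setIntegral_ball (ν := ν) (f := fun _ => 1) continuous_const p r
  simpa [measureReal_def, hν _ p r, mul_comm] using h

theorem abs_measureReal_ball_mul_integral_sub_le
    (hμ : IsUniformlyDistributed μ) (hν : IsUniformlyDistributed ν) (hf : Continuous f)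
    {ε : ℝ} (hε : 0 < ε) : ∃ r > 0, ∀ p,
      |μ.real (ball p r) * (∫ y, f y ∂ν) - ν.real (ball p r) * ∫ x, f x ∂μ|
        ≤ ε * (ν.real (ball p r) * μ.real Set.univ) := by
  obtain ⟨r, hr, hfr⟩ := exists_forall_abs_setIntegral_ball_sub_le hf hε
  refine ⟨r, hr, fun p => ?_⟩
  have hνp : ∀ x, ν.real (ball x r) = ν.real (ball p r) := fun x => by
    simp only [measureReal_def, hν x p r]
  have hfμ : Integrable f μ := hf.integrable_of_hasCompactSupport (.of_compactSpace f)
  rw [← hμ.integral_setIntegral_ball hf, ← integral_const_mul,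
    ← integral_sub (integrable_setIntegral_ball hf r) (hfμ.const_mul _), ← Real.norm_eq_abs,
    ← mul_assoc]
  refine norm_integral_le_of_norm_le_const (.of_forall fun x => ?_)
  simpa only [hνp, Real.norm_eq_abs] using hfr ν x

/- Christensen's argument: by Fubini, `∫∫_{B(x,r)} f dν dμ(x) = μ(B_r) ∫ f dν`, whereas uniform
continuity makes the left side close to `ν(B_r) ∫ f dμ` for small `r`. -/
theorem measureReal_univ_mul_integral_comm
    (hμ : IsUniformlyDistributed μ) (hν : IsUniformlyDistributed ν) (hf : Continuous f) :
    ν.real Set.univ * ∫ x, f x ∂μ = μ.real Set.univ * ∫ x, f x ∂ν := by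
  rcases eq_or_ne ν 0 with rfl | hν0
  · simp
  rcases isEmpty_or_nonempty X with hX | ⟨⟨p⟩⟩
  · exact absurd (Measure.eq_zero_of_isEmpty ν) hν0
  rw [← sub_eq_zero, ← abs_nonpos_iff]
  set M := μ.real Set.univ * ν.real Set.univ
  have hM : Tendsto (fun ε : ℝ => ε * M) (𝓝[>] 0) (𝓝 0) := by
    have h : Tendsto (fun ε : ℝ => ε * M) (𝓝 0) (𝓝 (0 * M)) := tendsto_id.mul_const M
    rw [zero_mul] at h
    exact h.mono_left nhdsWithin_le_nhds
  refine ge_of_tendsto hM (eventually_mem_nhdsWithin.mono fun ε hε => ?_)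
  obtain ⟨r, hr, hest⟩ := hμ.abs_measureReal_ball_mul_integral_sub_le hν hf hε
  have hpos : 0 < ν.real (ball p r) :=
    ENNReal.toReal_pos (hν.measure_ball_pos hν0 p hr).ne' (measure_ne_top _ _)
  have hscale : ν.real (ball p r)
        * (ν.real Set.univ * (∫ x, f x ∂μ) - μ.real Set.univ * ∫ x, f x ∂ν)
      = ν.real Set.univ
        * (ν.real (ball p r) * (∫ x, f x ∂μ) - μ.real (ball p r) * ∫ x, f x ∂ν) := by
    linear_combination (-∫ x, f x ∂ν) * hμ.measureReal_ball_mul_comm hν p r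
  refine le_of_mul_le_mul_left ?_ hpos
  calc ν.real (ball p r) * |ν.real Set.univ * (∫ x, f x ∂μ) - μ.real Set.univ * ∫ x, f x ∂ν|
      = ν.real Set.univ * |μ.real (ball p r) * (∫ x, f x ∂ν)
          - ν.real (ball p r) * ∫ x, f x ∂μ| := by
        rw [abs_sub_comm (μ.real (ball p r) * _), ← abs_of_pos hpos, ← abs_mul, abs_of_pos hpos,
          hscale, abs_mul, abs_of_nonneg measureReal_nonneg]
    _ ≤ ν.real Set.univ * (ε * (ν.real (ball p r) * μ.real Set.univ)) := by
        gcongr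
        exact hest p
    _ = ν.real (ball p r) * (ε * M) := by ring

end IsUniformlyDistributed

end UniformlyDistributed

section UnitSphere

variable {E : Type*} [NormedAddCommGroup E] [InnerProductSpace ℝ E]

/-- The self-isometry of the unit sphere induced by a linear isometry of the ambient space. -/
def unitSphereIsometryEquiv (e : E ≃ₗᵢ[ℝ] E) : sphere (0 : E) 1 ≃ᵢ sphere (0 : E) 1 where
  toEquiv := e.toEquiv.subtypeEquiv fun x => by simp
  isometry_toFun x y := e.isometry (x : E) y

theorem exists_unitSphereIsometryEquiv_apply_eq (x y : sphere (0 : E) 1) :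
    ∃ e : E ≃ₗᵢ[ℝ] E, unitSphereIsometryEquiv e x = y := by
  have hnorm : ‖(x : E)‖ = ‖(y : E)‖ := by simp only [norm_eq_of_mem_sphere]
  exact ⟨(ℝ ∙ ((x : E) - y))ᗮ.reflection, Subtype.ext (Submodule.reflection_sub hnorm)⟩

theorem Ioo_smul_coe_preimage_unitSphereIsometryEquiv (e : E ≃ₗᵢ[ℝ] E)
    (s : Set (sphere (0 : E) 1)) :
    Set.Ioo (0 : ℝ) 1 • ((↑) '' (unitSphereIsometryEquiv e ⁻¹' s) : Set E)
      = e ⁻¹' (Set.Ioo (0 : ℝ) 1 • ((↑) '' s)) := by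
  have hcoe : ((↑) '' (unitSphereIsometryEquiv e ⁻¹' s) : Set E) = e.symm '' ((↑) '' s) := by
    rw [← (unitSphereIsometryEquiv e).image_symm, Set.image_image, Set.image_image]
    rfl
  rw [hcoe, ← Set.image_eq_preimage_of_inverse e.apply_symm_apply e.symm_apply_apply]
  exact (Set.image_image2_distrib_right fun r x => map_smul e.symm r x).symm

theorem ball_subset_range_orthogonalProjectionOnto_unitSphere {v : E} (hv : ‖v‖ = 1) :
    ball 0 1 ⊆ Set.range fun x : sphere (0 : E) 1 => (ℝ ∙ v)ᗮ.orthogonalProjectionOnto (x : E) := by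
  intro w hw
  have hw1 : ‖(w : E)‖ ^ 2 ≤ 1 := by
    have : ‖(w : E)‖ < 1 := mem_ball_zero_iff.1 hw
    nlinarith [norm_nonneg (w : E)]
  have hvw : ⟪v, (w : E)⟫ = 0 := Submodule.mem_orthogonal_singleton_iff_inner_right.1 w.2
  refine ⟨⟨w + √(1 - ‖(w : E)‖ ^ 2) • v, ?_⟩, ?_⟩
  · rw [mem_sphere_zero_iff_norm, ← pow_left_inj₀ (norm_nonneg _) zero_le_one two_ne_zero,
      norm_add_sq_real, inner_smul_right, real_inner_comm, hvw, norm_smul, hv, mul_one,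
      Real.norm_eq_abs, sq_abs, Real.sq_sqrt (sub_nonneg.2 hw1)]
    ring
  · simp [Submodule.orthogonalProjectionOnto_orthogonalComplement_singleton_eq_zero]

variable [MeasurableSpace E] [BorelSpace E]

theorem measurePreserving_toSphere_unitSphereIsometryEquiv [FiniteDimensional ℝ E]
    (e : E ≃ₗᵢ[ℝ] E) :
    MeasurePreserving (unitSphereIsometryEquiv e)
      (volume : Measure E).toSphere (volume : Measure E).toSphere := by
  have hmeas := (unitSphereIsometryEquiv e).continuous.measurable
  refine ⟨hmeas, Measure.ext fun s hs => ?_⟩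
  rw [Measure.map_apply hmeas hs, Measure.toSphere_apply' _ hs,
    Measure.toSphere_apply' _ (hmeas hs),
    Ioo_smul_coe_preimage_unitSphereIsometryEquiv,
    e.measurePreserving.measure_preimage_emb e.toHomeomorph.measurableEmbedding]

theorem isUniformlyDistributed_toSphere [FiniteDimensional ℝ E] :
    IsUniformlyDistributed (volume : Measure E).toSphere :=
  .of_forall_exists_measurePreserving fun x y =>
    have ⟨e, he⟩ := exists_unitSphereIsometryEquiv_apply_eq x y
    ⟨_, he, measurePreserving_toSphere_unitSphereIsometryEquiv e⟩

theorem isUniformlyDistributed_hausdorffMeasure_unitSphere (s : ℝ) :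
    IsUniformlyDistributed (μH[s] : Measure (sphere (0 : E) 1)) :=
  .of_forall_exists_measurePreserving fun x y =>
    have ⟨_, he⟩ := exists_unitSphereIsometryEquiv_apply_eq x y
    ⟨_, he, IsometryEquiv.measurePreserving_hausdorffMeasure _ s⟩

variable {d : ℕ} [Fact (Module.finrank ℝ E = d + 1)]

theorem isAddHaarMeasure_hausdorffMeasure_orthogonal {v : E} (hv : v ≠ 0) :
    Measure.IsAddHaarMeasure (μH[(d : ℝ)] : Measure (ℝ ∙ v)ᗮ) := by
  have : FiniteDimensional ℝ E := .of_fact_finrank_eq_succ d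
  have h := isAddHaarMeasure_hausdorffMeasure (E := (ℝ ∙ v)ᗮ)
  rwa [Submodule.finrank_orthogonal_span_singleton (n := d) hv] at h

theorem isFiniteMeasure_hausdorffMeasure_unitSphere :
    IsFiniteMeasure (μH[(d : ℝ)] : Measure (sphere (0 : E) 1)) := by
  have : FiniteDimensional ℝ E := .of_fact_finrank_eq_succ d
  suffices IsLocallyFiniteMeasure (μH[(d : ℝ)] : Measure (sphere (0 : E) 1)) from inferInstance
  refine ⟨fun x => ?_⟩
  have hv : ‖-(x : E)‖ = 1 := by simp
  have := isAddHaarMeasure_hausdorffMeasure_orthogonal (d := d)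
    (norm_ne_zero_iff.1 (hv ▸ one_ne_zero))
  -- inverse stereographic projection from `-x` is Lipschitz near `0`, which it maps to `x`
  obtain ⟨K, t, ht, hK⟩ := (contDiff_stereoInvFunAux (v := -(x : E)) (m := 1)).comp
    (ℝ ∙ (-(x : E)))ᗮ.subtypeL.contDiff |>.locallyLipschitz 0
  have hK' : LipschitzOnWith K (stereoInvFun hv) t := hK
  have hx : stereoInvFun hv 0 = x := Subtype.ext (by simp)
  have hnhds := (isOpenEmbedding_stereographic_symm hv).isOpenMap.image_mem_nhds
    (inter_mem ht (ball_mem_nhds 0 one_pos))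
  have hsymm : ⇑(stereographic hv).symm = stereoInvFun hv := rfl
  rw [hsymm, hx] at hnhds
  refine ⟨stereoInvFun hv '' (t ∩ ball 0 1), hnhds, ?_⟩
  refine ((hK'.mono Set.inter_subset_left).hausdorffMeasure_image_le d.cast_nonneg).trans_lt ?_
  refine ENNReal.mul_lt_top (by simp) ?_
  exact (measure_mono Set.inter_subset_right).trans_lt measure_ball_lt_top

theorem hausdorffMeasure_unitSphere_ne_zero :
    (μH[(d : ℝ)] : Measure (sphere (0 : E) 1)) ≠ 0 := by
  intro h0
  have : FiniteDimensional ℝ E := .of_fact_finrank_eq_succ d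
  have hdim : Module.finrank ℝ E = d + 1 := Fact.out
  have : Nontrivial E := Module.nontrivial_of_finrank_pos (R := ℝ) (hdim ▸ d.succ_pos)
  obtain ⟨v, hv⟩ := exists_norm_eq E zero_le_one
  have := isAddHaarMeasure_hausdorffMeasure_orthogonal (d := d)
    (norm_ne_zero_iff.1 (hv ▸ one_ne_zero))
  have hproj : LipschitzWith (1 * 1)
      fun x : sphere (0 : E) 1 => (ℝ ∙ v)ᗮ.orthogonalProjectionOnto (x : E) :=
    (Submodule.lipschitzWith_orthogonalProjectionOnto (ℝ ∙ v)ᗮ).comp (LipschitzWith.subtype_val _)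
  have hrange := hproj.hausdorffMeasure_image_le d.cast_nonneg Set.univ
  rw [h0, Set.image_univ, Measure.coe_zero, Pi.zero_apply, mul_zero] at hrange
  exact (measure_ball_pos _ (0 : (ℝ ∙ v)ᗮ) one_pos).not_ge
    ((measure_mono (ball_subset_range_orthogonalProjectionOnto_unitSphere hv)).trans hrange)

theorem exists_integral_toSphere_eq_mul [FiniteDimensional ℝ E] :
    ∃ c : ℝ, ∀ f : sphere (0 : E) 1 → ℝ, Continuous f →
      ∫ θ, f θ ∂(volume : Measure E).toSphere = c * ∫ θ, f θ ∂μH[(d : ℝ)] := by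
  have := isFiniteMeasure_hausdorffMeasure_unitSphere (E := E) (d := d)
  have hne : (μH[(d : ℝ)] : Measure (sphere (0 : E) 1)).real Set.univ ≠ 0 := by
    rw [measureReal_def, ENNReal.toReal_ne_zero, Measure.measure_univ_ne_zero]
    exact ⟨hausdorffMeasure_unitSphere_ne_zero, measure_ne_top _ _⟩
  refine ⟨(volume : Measure E).toSphere.real Set.univ
    / (μH[(d : ℝ)] : Measure (sphere (0 : E) 1)).real Set.univ, fun f hf => ?_⟩
  rw [div_mul_eq_mul_div, eq_div_iff hne, mul_comm]
  exact isUniformlyDistributed_toSphere.measureReal_univ_mul_integral_comm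
    (isUniformlyDistributed_hausdorffMeasure_unitSphere d) hf

end UnitSphere

section Dilation

variable {E : Type*} [NormedAddCommGroup E] [NormedSpace ℝ E] [MeasurableSpace E] [BorelSpace E]
  {F : Type*} [NormedAddCommGroup F] [NormedSpace ℝ F]

theorem nnnorm_rpow_smul_map_smul_hausdorffMeasure {s : ℝ} (hs : 0 ≤ s) {R : ℝ} (hR : R ≠ 0) :
    ‖R‖₊ ^ s • (μH[s] : Measure E).map (R • ·) = μH[s] := by
  have hmeas : Measurable fun x : E => R • x := measurable_const_smul R
  ext A hA
  rw [Measure.smul_apply, Measure.map_apply hmeas hA, ← Measure.hausdorffMeasure_smul₀ hs hR,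
    Set.preimage_smul₀ hR, smul_inv_smul₀ hR]

theorem setIntegral_sphere_hausdorffMeasure {s : ℝ} (hs : 0 ≤ s) {R : ℝ} (hR : 0 < R) (f : E → F) :
    ∫ x in sphere 0 R, f x ∂μH[s] = R ^ s • ∫ θ : sphere (0 : E) 1, f (R • (θ : E)) ∂μH[s] := by
  have hdil : MeasurableEmbedding fun x : E => R • x :=
    (Homeomorph.smulOfNeZero R hR.ne').measurableEmbedding
  have hcoe : (μH[s] : Measure (sphere (0 : E) 1)).map Subtype.val
      = μH[s].restrict (sphere 0 1) := by
    rw [isometry_subtype_coe.map_hausdorffMeasure (.inl hs), Subtype.range_coe]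
  have hpre : (fun x : E => R • x) ⁻¹' sphere 0 R = sphere 0 1 := by
    ext x
    simp [norm_smul, abs_of_pos hR, hR.ne']
  calc ∫ x in sphere 0 R, f x ∂μH[s]
      = R ^ s • ∫ x in sphere (0 : E) R, f x ∂(μH[s].map (R • ·)) := by
        conv_lhs => rw [← nnnorm_rpow_smul_map_smul_hausdorffMeasure (E := E) hs hR.ne',
          Measure.restrict_smul, integral_smul_nnreal_measure]
        rw [NNReal.smul_def, NNReal.coe_rpow, coe_nnnorm, Real.norm_of_nonneg hR.le]
    _ = R ^ s • ∫ x in sphere (0 : E) 1, f (R • x) ∂μH[s] := by rw [hdil.setIntegral_map, hpre]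
    _ = R ^ s • ∫ θ : sphere (0 : E) 1, f (R • (θ : E)) ∂μH[s] := by
        rw [← hcoe, (MeasurableEmbedding.subtype_coe isClosed_sphere.measurableSet).integral_map]

end Dilation

section PolarCoordinates

variable {E : Type*} [NormedAddCommGroup E] [NormedSpace ℝ E] {F : Type*}

theorem comp_smul_homeomorphUnitSphereProd (f : E → F) :
    (fun p : sphere (0 : E) 1 × Set.Ioi (0 : ℝ) => f ((p.2 : ℝ) • (p.1 : E)))
      ∘ homeomorphUnitSphereProd E = f ∘ (↑) := by
  ext z
  have hz : ‖(z : E)‖ ≠ 0 := norm_ne_zero_iff.2 z.2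
  simp [smul_smul, hz]

variable [FiniteDimensional ℝ E] [MeasurableSpace E] [BorelSpace E] [NormedAddCommGroup F]
  {μ : Measure E} [μ.IsAddHaarMeasure] {f : E → F}

theorem integrable_smul_toSphere_prod_volumeIoiPow (hf : Integrable f μ) :
    Integrable (fun p : sphere (0 : E) 1 × Set.Ioi (0 : ℝ) => f ((p.2 : ℝ) • (p.1 : E)))
      (μ.toSphere.prod (.volumeIoiPow (Module.finrank ℝ E - 1))) := by
  rw [← μ.measurePreserving_homeomorphUnitSphereProd.integrable_comp_emb
    (Homeomorph.measurableEmbedding _), comp_smul_homeomorphUnitSphereProd,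
    ← integrableOn_iff_comap_subtypeVal (measurableSet_singleton 0).compl]
  exact hf.integrableOn

variable [NormedSpace ℝ F]

theorem continuous_integral_toSphere {g : ℝ → sphere (0 : E) 1 → F}
    (hg : Continuous (Function.uncurry g)) : Continuous fun r => ∫ θ, g r θ ∂μ.toSphere := by
  simpa only [setIntegral_univ] using
    continuous_parametric_integral_of_continuous (μ := μ.toSphere) hg isCompact_univ

theorem integral_volumeIoiPow (k : ℕ) (g : ℝ → F) :
    ∫ r : Set.Ioi (0 : ℝ), g r ∂.volumeIoiPow k = ∫ r in Set.Ioi (0 : ℝ), r ^ k • g r := by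
  simp only [Measure.volumeIoiPow, ENNReal.ofReal]
  rw [integral_withDensity_eq_integral_smul
      (measurable_subtype_coe.pow_const _).real_toNNReal,
    integral_subtype_comap measurableSet_Ioi fun r => Real.toNNReal (r ^ k) • g r]
  refine setIntegral_congr_fun measurableSet_Ioi fun r hr => ?_
  simp only [NNReal.smul_def, Real.coe_toNNReal _ (pow_nonneg (Set.mem_Ioi.1 hr).le k)]

theorem integral_eq_integral_Ioi_toSphere [Nontrivial E] (hf : Integrable f μ) :
    ∫ x, f x ∂μ = ∫ r in Set.Ioi (0 : ℝ),
      r ^ (Module.finrank ℝ E - 1) • ∫ θ : sphere (0 : E) 1, f (r • (θ : E)) ∂μ.toSphere := by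
  calc ∫ x, f x ∂μ
      = ∫ x : ({0}ᶜ : Set E), f x ∂μ.comap (↑) := by
        rw [integral_subtype_comap (measurableSet_singleton _).compl f, restrict_compl_singleton]
    _ = ∫ p : sphere (0 : E) 1 × Set.Ioi (0 : ℝ), f ((p.2 : ℝ) • (p.1 : E))
          ∂μ.toSphere.prod (.volumeIoiPow (Module.finrank ℝ E - 1)) := by
        rw [← μ.measurePreserving_homeomorphUnitSphereProd.integral_comp
          (Homeomorph.measurableEmbedding _)]
        exact congrArg (integral _) (comp_smul_homeomorphUnitSphereProd f).symm
    _ = ∫ r : Set.Ioi (0 : ℝ), (∫ θ : sphere (0 : E) 1, f ((r : ℝ) • (θ : E)) ∂μ.toSphere)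
          ∂.volumeIoiPow (Module.finrank ℝ E - 1) :=
        integral_prod_symm _ (integrable_smul_toSphere_prod_volumeIoiPow hf)
    _ = _ := integral_volumeIoiPow _ fun r => ∫ θ : sphere (0 : E) 1, f (r • (θ : E)) ∂μ.toSphere

theorem setIntegral_ball_eq_intervalIntegral_toSphere [Nontrivial E] {R : ℝ} (hR : 0 ≤ R)
    (hf : IntegrableOn f (ball 0 R) μ) :
    ∫ x in ball 0 R, f x ∂μ = ∫ r in (0 : ℝ)..R,
      r ^ (Module.finrank ℝ E - 1) • ∫ θ : sphere (0 : E) 1, f (r • (θ : E)) ∂μ.toSphere := by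
  rw [← integral_indicator measurableSet_ball,
    integral_eq_integral_Ioi_toSphere (hf.integrable_indicator measurableSet_ball),
    intervalIntegral.integral_of_le hR, integral_Ioc_eq_integral_Ioo, ← Set.Ioi_inter_Iio,
    ← setIntegral_indicator measurableSet_Iio]
  refine setIntegral_congr_fun measurableSet_Ioi fun r hr => ?_
  have hmem : ∀ θ : sphere (0 : E) 1, r • (θ : E) ∈ ball 0 R ↔ r ∈ Set.Iio R := fun θ => by
    simp [norm_smul, abs_of_pos (Set.mem_Ioi.1 hr)]
  by_cases h : r ∈ Set.Iio R <;> simp [Set.indicator, hmem, h]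

end PolarCoordinates

section Divergence

variable {N : ℕ} {F : EuclideanSpace ℝ (Fin N) → EuclideanSpace ℝ (Fin N)}

theorem vdiv_smul {g : EuclideanSpace ℝ (Fin N) → ℝ} {x : EuclideanSpace ℝ (Fin N)}
    (hg : DifferentiableAt ℝ g x) (hF : DifferentiableAt ℝ F x) :
    vdiv (fun y => g y • F y) x = g x * vdiv F x + fderiv ℝ g x (F x) := by
  have hsum : fderiv ℝ g x (F x) = ∑ i, F x i * fderiv ℝ g x (EuclideanSpace.single i 1) := by
    conv_lhs => rw [← (EuclideanSpace.basisFun (Fin N) ℝ).sum_repr (F x)]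
    simp
  rw [vdiv, fderiv_fun_smul hg hF, hsum, vdiv, mul_sum, ← sum_add_distrib]
  simp [mul_comm]

theorem vdiv_fun_sum {ι : Type*} {s : Finset ι}
    {G : ι → EuclideanSpace ℝ (Fin N) → EuclideanSpace ℝ (Fin N)} {x : EuclideanSpace ℝ (Fin N)}
    (hG : ∀ i ∈ s, DifferentiableAt ℝ (G i) x) :
    vdiv (fun y => ∑ i ∈ s, G i y) x = ∑ i ∈ s, vdiv (G i) x := by
  simp only [vdiv, fderiv_fun_sum hG]
  rw [sum_comm]
  simp

theorem continuous_vdiv (hF : ContDiff ℝ 1 F) : Continuous (vdiv F) := by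
  have := hF.continuous_fderiv one_ne_zero
  unfold vdiv
  fun_prop

theorem integral_vdiv_eq_zero (hF : ContDiff ℝ 1 F) (hsupp : HasCompactSupport F) :
    ∫ x, vdiv F x = 0 := by
  have hcoord (i : Fin N) : ContDiff ℝ 1 fun x => F x i := contDiff_euclidean.1 hF i
  have hsupp_coord (i : Fin N) : HasCompactSupport fun x => F x i :=
    hsupp.comp_left (g := fun v : EuclideanSpace ℝ (Fin N) => v i) rfl
  have hfderiv (i : Fin N) (x v : EuclideanSpace ℝ (Fin N)) :
      fderiv ℝ F x v i = fderiv ℝ (fun y => F y i) x v := by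
    have h := (EuclideanSpace.proj (𝕜 := ℝ) i).hasFDerivAt.comp x
      (hF.differentiable one_ne_zero x).hasFDerivAt
    exact (congrArg (fun L => L v) h.fderiv).symm
  have hint (i : Fin N) :
      Integrable fun x => fderiv ℝ (fun y => F y i) x (EuclideanSpace.single i 1) :=
    (((hcoord i).continuous_fderiv one_ne_zero).clm_apply
      continuous_const).integrable_of_hasCompactSupport ((hsupp_coord i).fderiv_apply ℝ _)
  simp only [vdiv, hfderiv]
  rw [integral_finsetSum _ fun i _ => hint i]
  refine sum_eq_zero fun i _ => ?_
  simpa using integral_mul_fderiv_eq_neg_fderiv_mul_of_integrable (f := fun _ => (1 : ℝ))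
    (g := fun y => F y i) (v := EuclideanSpace.single i 1) (μ := volume) (by simp)
    (by simpa using hint i)
    (by simpa using (hcoord i).continuous.integrable_of_hasCompactSupport (hsupp_coord i))
    (fun x _ => by fun_prop) (fun x _ => (hcoord i).differentiable one_ne_zero x)

end Divergence

section DivergenceTheorem

theorem hasDerivAt_max_zero_sq (s : ℝ) :
    HasDerivAt (fun t : ℝ => max 0 t ^ 2) (2 * max 0 s) s := by
  have hbound (t : ℝ) : |max 0 t ^ 2 - max 0 s ^ 2 - (t - s) * (2 * max 0 s)| ≤ |t - s| ^ 2 := by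
    rw [sq_abs, abs_le]
    rcases max_cases 0 t with ⟨ht, _⟩ | ⟨ht, _⟩ <;> rcases max_cases 0 s with ⟨hs, _⟩ | ⟨hs, _⟩ <;>
      rw [ht, hs] <;> constructor <;> nlinarith
  rw [hasDerivAt_iff_isLittleO]
  refine (Asymptotics.IsBigO.of_bound 1 (.of_forall fun t => ?_)).trans_isLittleO
    (Asymptotics.isLittleO_pow_sub_sub s one_lt_two)
  simpa using hbound t

theorem hasFDerivAt_max_zero_sq_sub_norm_sq {E : Type*} [NormedAddCommGroup E]
    [InnerProductSpace ℝ E] (R : ℝ) (x : E) :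
    HasFDerivAt (fun y : E => max 0 (R ^ 2 - ‖y‖ ^ 2) ^ 2)
      (-(4 * max 0 (R ^ 2 - ‖x‖ ^ 2)) • innerSL ℝ x) x := by
  refine ((hasDerivAt_max_zero_sq _).comp_hasFDerivAt x
    ((hasStrictFDerivAt_norm_sq x).hasFDerivAt.const_sub (R ^ 2))).congr_fderiv ?_
  ext v
  simp only [smul_neg, neg_apply, smul_apply, coe_innerSL_apply, nsmul_eq_mul, Nat.cast_ofNat,
    smul_eq_mul, neg_smul, neg_inj]
  ring

theorem contDiff_max_zero_sq_sub_norm_sq {E : Type*} [NormedAddCommGroup E]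
    [InnerProductSpace ℝ E] (R : ℝ) :
    ContDiff ℝ 1 fun x : E => max 0 (R ^ 2 - ‖x‖ ^ 2) ^ 2 := by
  refine contDiff_one_iff_hasFDerivAt.2 ⟨_, ?_, hasFDerivAt_max_zero_sq_sub_norm_sq R⟩
  fun_prop

theorem max_zero_sq_sub_norm_sq_eq_zero {E : Type*} [SeminormedAddCommGroup E] {R : ℝ}
    (hR : 0 ≤ R) {x : E} (hx : x ∉ ball 0 R) : max 0 (R ^ 2 - ‖x‖ ^ 2) = 0 := by
  rw [mem_ball_zero_iff, not_lt] at hx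
  exact max_eq_left (sub_nonpos.2 (by gcongr))

theorem hasCompactSupport_max_zero_sq_sub_norm_sq {E : Type*} [SeminormedAddCommGroup E]
    [ProperSpace E] {R : ℝ} (hR : 0 ≤ R) :
    HasCompactSupport fun x : E => max 0 (R ^ 2 - ‖x‖ ^ 2) :=
  .of_support_subset_isCompact (isCompact_closedBall 0 R) fun _ hx => ball_subset_closedBall
    (not_not.1 fun hball => hx (max_zero_sq_sub_norm_sq_eq_zero hR hball))

theorem setIntegral_ball_eq_integral_max_zero {E G : Type*} [SeminormedAddCommGroup E]
    [MeasurableSpace E] [OpensMeasurableSpace E] [NormedAddCommGroup G] [NormedSpace ℝ G]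
    {μ : Measure E} {R : ℝ} (hR : 0 ≤ R) (f : ℝ → E → G) (hf : ∀ x, f 0 x = 0) :
    ∫ x in ball 0 R, f (R ^ 2 - ‖x‖ ^ 2) x ∂μ = ∫ x, f (max 0 (R ^ 2 - ‖x‖ ^ 2)) x ∂μ := by
  rw [← setIntegral_eq_integral_of_forall_compl_eq_zero
    (f := fun x => f (max 0 (R ^ 2 - ‖x‖ ^ 2)) x)
    fun x hx => by rw [max_zero_sq_sub_norm_sq_eq_zero hR hx, hf]]
  refine setIntegral_congr_fun measurableSet_ball fun x hx => ?_
  have hnonneg : 0 ≤ R ^ 2 - ‖x‖ ^ 2 :=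
    sub_nonneg.2 (by gcongr; exact (mem_ball_zero_iff.1 hx).le)
  simp only [max_eq_right hnonneg]

theorem eq_zero_of_forall_intervalIntegral_sq_sub_sq_mul_eq_zero {h : ℝ → ℝ} (hh : Continuous h)
    (hzero : ∀ R, 0 < R → ∫ r in (0 : ℝ)..R, (R ^ 2 - r ^ 2) * h r = 0) {R : ℝ} (hR : 0 < R) :
    h R = 0 := by
  have hprim (R : ℝ) : HasDerivAt (fun s => ∫ r in (0 : ℝ)..s, h r) (h R) R :=
    (hh.integral_hasStrictDerivAt 0 R).hasDerivAt
  have hprim_sq (R : ℝ) : HasDerivAt (fun s => ∫ r in (0 : ℝ)..s, r ^ 2 * h r) (R ^ 2 * h R) R :=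
    (Continuous.integral_hasStrictDerivAt (by fun_prop) 0 R).hasDerivAt
  have hsplit (R : ℝ) (hR : 0 < R) :
      R ^ 2 * (∫ r in (0 : ℝ)..R, h r) - ∫ r in (0 : ℝ)..R, r ^ 2 * h r = 0 := by
    rw [← intervalIntegral.integral_const_mul, ← intervalIntegral.integral_sub]
    · simpa only [sub_mul] using hzero R hR
    all_goals exact Continuous.intervalIntegrable (by fun_prop) _ _
  have hprim_zero (R : ℝ) (hR : 0 < R) : ∫ r in (0 : ℝ)..R, h r = 0 := by
    have hderiv := ((hasDerivAt_pow 2 R).fun_mul (hprim R)).fun_sub (hprim_sq R)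
    have hderiv_zero := (hasDerivAt_const R (0 : ℝ)).congr_of_eventuallyEq
      ((eventually_gt_nhds hR).mono hsplit)
    simpa [hR.ne'] using hderiv.unique hderiv_zero
  exact (hprim R).unique ((hasDerivAt_const R (0 : ℝ)).congr_of_eventuallyEq
    ((eventually_gt_nhds hR).mono hprim_zero))

theorem intervalIntegral_eq_of_forall_sq_sub_sq_mul {a b : ℝ → ℝ} (ha : Continuous a)
    (hb : Continuous b)
    (hab : ∀ R, 0 < R → ∫ r in (0 : ℝ)..R, (R ^ 2 - r ^ 2) ^ 2 * a r
      = 4 * ∫ r in (0 : ℝ)..R, (R ^ 2 - r ^ 2) * (r * b r)) {R : ℝ} (hR : 0 < R) :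
    ∫ r in (0 : ℝ)..R, a r = b R := by
  let A : ℝ → ℝ := fun r => ∫ s in (0 : ℝ)..r, a s
  have hA (r : ℝ) : HasDerivAt A (a r) r := (ha.integral_hasStrictDerivAt 0 r).hasDerivAt
  have hA_cont : Continuous A := continuous_iff_continuousAt.2 fun r => (hA r).continuousAt
  have hweight (R r : ℝ) : HasDerivAt (fun r => (R ^ 2 - r ^ 2) ^ 2) (-4 * (R ^ 2 - r ^ 2) * r) r :=
    (((hasDerivAt_pow 2 r).const_sub (R ^ 2)).fun_pow 2).congr_deriv (by norm_num; ring)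
  have hparts (R : ℝ) : ∫ r in (0 : ℝ)..R, (R ^ 2 - r ^ 2) ^ 2 * a r
      = 4 * ∫ r in (0 : ℝ)..R, (R ^ 2 - r ^ 2) * (r * A r) := by
    rw [intervalIntegral.integral_mul_deriv_eq_deriv_mul (fun r _ => hweight R r) (fun r _ => hA r)
      (Continuous.intervalIntegrable (by fun_prop) _ _) (ha.intervalIntegrable _ _),
      ← intervalIntegral.integral_const_mul]
    simp [A, ← intervalIntegral.integral_neg, mul_assoc]
  have hdiff := eq_zero_of_forall_intervalIntegral_sq_sub_sq_mul_eq_zero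
    (h := fun r => r * (A r - b r)) (by fun_prop) (fun R hR => ?_) hR
  · exact sub_eq_zero.1 ((mul_eq_zero.1 hdiff).resolve_left hR.ne')
  · have h := (hparts R).symm.trans (hab R hR)
    rw [mul_right_inj' four_ne_zero, ← sub_eq_zero, ← intervalIntegral.integral_sub] at h
    · simpa only [mul_sub] using h
    all_goals exact Continuous.intervalIntegrable (by fun_prop) _ _

variable {N : ℕ} {F : EuclideanSpace ℝ (Fin N) → EuclideanSpace ℝ (Fin N)}

theorem setIntegral_ball_sq_sub_norm_sq_mul_vdiv (hF : ContDiff ℝ 1 F) {R : ℝ} (hR : 0 < R) :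
    ∫ x in ball 0 R, (R ^ 2 - ‖x‖ ^ 2) ^ 2 * vdiv F x
      = 4 * ∫ x in ball 0 R, (R ^ 2 - ‖x‖ ^ 2) * ⟪F x, x⟫ := by
  let w : EuclideanSpace ℝ (Fin N) → ℝ := fun x => max 0 (R ^ 2 - ‖x‖ ^ 2)
  have hw := hasFDerivAt_max_zero_sq_sub_norm_sq (E := EuclideanSpace ℝ (Fin N)) R
  have hw_supp : HasCompactSupport w := hasCompactSupport_max_zero_sq_sub_norm_sq hR.le
  have hw_sq_supp : HasCompactSupport fun x => w x ^ 2 :=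
    hw_supp.comp_left (g := fun s => s ^ 2) (zero_pow two_ne_zero)
  have hvdiv (x : EuclideanSpace ℝ (Fin N)) :
      vdiv (fun y => w y ^ 2 • F y) x = w x ^ 2 * vdiv F x - 4 * (w x * ⟪F x, x⟫) := by
    rw [vdiv_smul (hw x).differentiableAt (hF.differentiable one_ne_zero x), (hw x).fderiv]
    simp [w, real_inner_comm, mul_assoc, sub_eq_add_neg]
  have hzero : ∫ x, vdiv (fun y => w y ^ 2 • F y) x = 0 :=
    integral_vdiv_eq_zero ((contDiff_max_zero_sq_sub_norm_sq R).smul hF) hw_sq_supp.smul_right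
  have hvdiv_cont := continuous_vdiv hF
  have hF_cont := hF.continuous
  simp only [hvdiv] at hzero
  rw [integral_sub, integral_const_mul, sub_eq_zero] at hzero
  · rwa [setIntegral_ball_eq_integral_max_zero hR.le (fun s x => s ^ 2 * vdiv F x) (by simp),
      setIntegral_ball_eq_integral_max_zero hR.le (fun s x => s * ⟪F x, x⟫) (by simp)]
  · exact Continuous.integrable_of_hasCompactSupport (by fun_prop) hw_sq_supp.mul_right
  · exact Continuous.integrable_of_hasCompactSupport (by fun_prop) hw_supp.mul_right.mul_left

theorem setIntegral_ball_vdiv_eq_integral_toSphere [Nontrivial (EuclideanSpace ℝ (Fin N))]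
    (hF : ContDiff ℝ 1 F) {R : ℝ} (hR : 0 < R) :
    ∫ x in ball 0 R, vdiv F x
      = R ^ (N - 1) *
        ∫ θ : sphere (0 : EuclideanSpace ℝ (Fin N)) 1, ⟪F (R • θ), θ⟫ ∂volume.toSphere := by
  have hvdiv := continuous_vdiv hF
  have hF_cont := hF.continuous
  have hpolar {f : EuclideanSpace ℝ (Fin N) → ℝ} (hf : Continuous f) {R : ℝ} (hR : 0 < R) :
      ∫ x in ball 0 R, f x = ∫ r in (0 : ℝ)..R, r ^ (N - 1) *
        ∫ θ : sphere (0 : EuclideanSpace ℝ (Fin N)) 1, f (r • θ) ∂volume.toSphere := by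
    simpa using setIntegral_ball_eq_intervalIntegral_toSphere hR.le
      (hf.continuousOn.integrableOn_compact (isCompact_closedBall 0 R)
        |>.mono_set ball_subset_closedBall)
  have hsphere {g : ℝ → sphere (0 : EuclideanSpace ℝ (Fin N)) 1 → ℝ}
      (hg : Continuous (Function.uncurry g)) :
      Continuous fun r => r ^ (N - 1) * ∫ θ, g r θ ∂volume.toSphere :=
    (continuous_pow _).mul (continuous_integral_toSphere hg)
  have hnorm (r : ℝ) (θ : sphere (0 : EuclideanSpace ℝ (Fin N)) 1) :
      ‖r • (θ : EuclideanSpace ℝ (Fin N))‖ ^ 2 = r ^ 2 := by simp [norm_smul]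
  have hflux_cont : Continuous fun r => r ^ (N - 1) *
      ∫ θ : sphere (0 : EuclideanSpace ℝ (Fin N)) 1, ⟪F (r • θ), θ⟫ ∂volume.toSphere :=
    hsphere (g := fun r θ => ⟪F (r • θ), θ⟫) (by unfold Function.uncurry; fun_prop)
  rw [hpolar hvdiv hR]
  refine intervalIntegral_eq_of_forall_sq_sub_sq_mul
    (hsphere (by unfold Function.uncurry; fun_prop)) hflux_cont (fun R hR => ?_) hR
  have h := setIntegral_ball_sq_sub_norm_sq_mul_vdiv hF hR
  rw [hpolar (by fun_prop) hR, hpolar (by fun_prop) hR] at h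
  simpa only [hnorm, real_inner_smul_right, integral_const_mul, mul_left_comm] using h

theorem exists_setIntegral_ball_vdiv_eq_mul (N : ℕ) :
    ∃ c : ℝ, ∀ F : EuclideanSpace ℝ (Fin N) → EuclideanSpace ℝ (Fin N), ContDiff ℝ 1 F →
      ∀ R, 0 < R → ∫ x in ball 0 R, vdiv F x
        = c * ∫ x in sphere 0 R, ⟪F x, ‖x‖⁻¹ • x⟫ ∂μH[(N : ℝ) - 1] := by
  rcases N with _ | d
  · exact ⟨0, fun F _ R _ => by simp [vdiv]⟩
  have : Fact (Module.finrank ℝ (EuclideanSpace ℝ (Fin (d + 1))) = d + 1) :=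
    ⟨finrank_euclideanSpace_fin⟩
  obtain ⟨c, hc⟩ := exists_integral_toSphere_eq_mul (E := EuclideanSpace ℝ (Fin (d + 1))) (d := d)
  refine ⟨c, fun F hF R hR => ?_⟩
  have hF_cont := hF.continuous
  have hnormal (θ : sphere (0 : EuclideanSpace ℝ (Fin (d + 1))) 1) :
      ‖R • (θ : EuclideanSpace ℝ (Fin (d + 1)))‖⁻¹ • R • (θ : EuclideanSpace ℝ (Fin (d + 1)))
        = θ := by
    simp [norm_smul, abs_of_pos hR, smul_smul, hR.ne']
  rw [setIntegral_ball_vdiv_eq_integral_toSphere hF hR, hc _ (by fun_prop), Nat.cast_succ,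
    add_sub_cancel_right, setIntegral_sphere_hausdorffMeasure d.cast_nonneg hR]
  simp only [hnormal, Real.rpow_natCast, smul_eq_mul, Nat.add_sub_cancel]
  ring

end DivergenceTheorem

section MeanCurvatureFlux

variable {E : Type*} [NormedAddCommGroup E] [InnerProductSpace ℝ E] [CompleteSpace E]

/-- The flux `∇v / √(1 + |∇v|²)`, whose divergence is the mean curvature of the graph of `v`. -/
def mcFlux (v : E → ℝ) (y : E) : E :=
  (√(1 + ‖gradient v y‖ ^ 2))⁻¹ • gradient v y

theorem sqrt_one_add_norm_gradient_sq_pos (v : E → ℝ) (y : E) : 0 < √(1 + ‖gradient v y‖ ^ 2) := by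
  positivity

variable {v : E → ℝ}

theorem contDiff_gradient (hv : ContDiff ℝ 2 v) : ContDiff ℝ 1 (gradient v) :=
  (InnerProductSpace.toDual ℝ E).symm.contDiff.comp (hv.fderiv_right (by norm_num))

theorem contDiff_sqrt_one_add_norm_gradient_sq (hv : ContDiff ℝ 2 v) :
    ContDiff ℝ 1 fun y => √(1 + ‖gradient v y‖ ^ 2) :=
  (contDiff_const.add ((contDiff_gradient hv).norm_sq ℝ)).sqrt fun y => by positivity

theorem contDiff_mcFlux (hv : ContDiff ℝ 2 v) : ContDiff ℝ 1 (mcFlux v) :=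
  ((contDiff_sqrt_one_add_norm_gradient_sq hv).inv fun y =>
    (sqrt_one_add_norm_gradient_sq_pos v y).ne').smul (contDiff_gradient hv)

theorem inner_fderiv_gradient_left (hv : ContDiff ℝ 2 v) (x y z : E) :
    ⟪fderiv ℝ (gradient v) x y, z⟫ = fderiv ℝ (fun w => fderiv ℝ v w z) x y := by
  have hgrad := ((contDiff_gradient hv).differentiable one_ne_zero x).hasFDerivAt
  have hpartial : (fun w => fderiv ℝ v w z) = fun w => ⟪gradient v w, z⟫ :=
    funext fun w => inner_gradient_left.symm
  rw [hpartial, (hgrad.inner ℝ (hasFDerivAt_const z x)).fderiv]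
  simp

theorem inner_fderiv_gradient_comm (hv : ContDiff ℝ 2 v) (x y z : E) :
    ⟪fderiv ℝ (gradient v) x y, z⟫ = ⟪fderiv ℝ (gradient v) x z, y⟫ := by
  have hfderiv : DifferentiableAt ℝ (fderiv ℝ v) x :=
    (hv.fderiv_right (m := 1) (by norm_num)).differentiable one_ne_zero x
  have hsnd (y z : E) : ⟪fderiv ℝ (gradient v) x y, z⟫ = fderiv ℝ (fderiv ℝ v) x y z := by
    rw [inner_fderiv_gradient_left hv, fderiv_clm_apply hfderiv (differentiableAt_const z)]
    simp
  rw [hsnd, hsnd]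
  exact hv.contDiffAt.isSymmSndFDerivAt (by simp) y z

theorem fderiv_sqrt_one_add_norm_gradient_sq (hv : ContDiff ℝ 2 v) (y e : E) :
    fderiv ℝ (fun x => √(1 + ‖gradient v x‖ ^ 2)) y e
      = fderiv ℝ (fun x => fderiv ℝ v x e) y (mcFlux v y) := by
  have hgrad := ((contDiff_gradient hv).differentiable one_ne_zero y).hasFDerivAt
  have hsqrt := (hgrad.norm_sq.const_add 1).sqrt (by positivity)
  rw [hsqrt.fderiv, mcFlux, map_smul, ← inner_fderiv_gradient_left hv,
    inner_fderiv_gradient_comm hv]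
  simp only [one_div, mul_inv_rev, smul_apply, ContinuousLinearMap.comp_apply, coe_innerSL_apply,
    inner_gradient_left, nsmul_eq_mul, Nat.cast_ofNat, smul_eq_mul, inner_gradient_right,
    Real.ringHom_apply]
  ring

end MeanCurvatureFlux

section Conservation

variable {N m : ℕ} {Ht : (Fin m → ℝ) → ℝ} {u : Fin m → EuclideanSpace ℝ (Fin N) → ℝ}

/-- The Lagrangian density `∑ᵢ √(1 + |∇uᵢ|²) - H̃(u)` of the prescribed mean curvature system. -/
def mcLagrangian (Ht : (Fin m → ℝ) → ℝ) (u : Fin m → EuclideanSpace ℝ (Fin N) → ℝ)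
    (y : EuclideanSpace ℝ (Fin N)) : ℝ :=
  ∑ i, √(1 + ‖gradient (u i) y‖ ^ 2) - Ht fun j => u j y

/-- The momentum density `∑ᵢ ∂ₑuᵢ ∇uᵢ / √(1 + |∇uᵢ|²)` in the direction `e`: the row `e` of the
stress tensor of the system, without its diagonal term `mcLagrangian`. -/
def mcMomentum (u : Fin m → EuclideanSpace ℝ (Fin N) → ℝ) (e y : EuclideanSpace ℝ (Fin N)) :
    EuclideanSpace ℝ (Fin N) :=
  ∑ i, fderiv ℝ (u i) y e • mcFlux (u i) y

theorem contDiff_fderiv_apply_smul_mcFlux {v : EuclideanSpace ℝ (Fin N) → ℝ} (hv : ContDiff ℝ 2 v)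
    (e : EuclideanSpace ℝ (Fin N)) : ContDiff ℝ 1 fun y => fderiv ℝ v y e • mcFlux v y :=
  ((hv.fderiv_right (by norm_num)).clm_apply contDiff_const).smul (contDiff_mcFlux hv)

theorem contDiff_mcMomentum (hu : ∀ i, ContDiff ℝ 2 (u i)) (e : EuclideanSpace ℝ (Fin N)) :
    ContDiff ℝ 1 (mcMomentum u e) :=
  ContDiff.sum fun i _ => contDiff_fderiv_apply_smul_mcFlux (hu i) e

theorem hasFDerivAt_mcLagrangian (hHt : Differentiable ℝ Ht) (hu : ∀ i, ContDiff ℝ 2 (u i))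
    (y : EuclideanSpace ℝ (Fin N)) :
    HasFDerivAt (mcLagrangian Ht u)
      (∑ i, fderiv ℝ (fun z => √(1 + ‖gradient (u i) z‖ ^ 2)) y
        - ∑ i, fderiv ℝ Ht (fun j => u j y) (Pi.single i 1) • fderiv ℝ (u i) y) y := by
  have hsqrt (i : Fin m) :=
    ((contDiff_sqrt_one_add_norm_gradient_sq (hu i)).differentiable one_ne_zero y).hasFDerivAt
  have hu_pi : HasFDerivAt (fun z j => u j z)
      (ContinuousLinearMap.pi fun j => fderiv ℝ (u j) y) y :=
    hasFDerivAt_pi.2 fun j => ((hu j).differentiable two_ne_zero y).hasFDerivAt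
  refine (HasFDerivAt.fun_sum fun i _ => hsqrt i).fun_sub
    (((hHt _).hasFDerivAt.comp y hu_pi).congr_fderiv ?_)
  ext e
  rw [ContinuousLinearMap.comp_apply,
    pi_eq_sum_univ' (ContinuousLinearMap.pi (fun j => fderiv ℝ (u j) y) e)]
  simp [mul_comm]

/-- Noether's conservation law for translations in the direction `e`. -/
theorem vdiv_mcMomentum (hHt : Differentiable ℝ Ht) (hu : ∀ i, ContDiff ℝ 2 (u i))
    (hsol : ∀ i x, -vdiv (mcFlux (u i)) x = fderiv ℝ Ht (fun j => u j x) (Pi.single i 1))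
    (e y : EuclideanSpace ℝ (Fin N)) :
    vdiv (mcMomentum u e) y = fderiv ℝ (mcLagrangian Ht u) y e := by
  have hterm (i : Fin m) : vdiv (fun z => fderiv ℝ (u i) z e • mcFlux (u i) z) y
      = fderiv ℝ (u i) y e * vdiv (mcFlux (u i)) y
        + fderiv ℝ (fun z => √(1 + ‖gradient (u i) z‖ ^ 2)) y e := by
    have hpartial : ContDiff ℝ 1 fun z => fderiv ℝ (u i) z e :=
      ((hu i).fderiv_right (by norm_num)).clm_apply contDiff_const
    rw [vdiv_smul (hpartial.differentiable one_ne_zero y)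
      ((contDiff_mcFlux (hu i)).differentiable one_ne_zero y),
      fderiv_sqrt_one_add_norm_gradient_sq (hu i)]
  have hmom : vdiv (mcMomentum u e) y = _ := vdiv_fun_sum fun i _ =>
    (contDiff_fderiv_apply_smul_mcFlux (hu i) e).differentiable one_ne_zero y
  rw [hmom, (hasFDerivAt_mcLagrangian hHt hu y).fderiv]
  simp only [hterm, ← hsol]
  simp [sum_add_distrib, add_comm, mul_comm]

end Conservation

section Slices

variable {n : ℕ}

/-- The orthogonal projection `(x', t) ↦ x'` from `ℝ^{n+1}` onto `ℝ^n`. -/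
def horizontalProj (n : ℕ) : EuclideanSpace ℝ (Fin (n + 1)) →L[ℝ] EuclideanSpace ℝ (Fin n) :=
  (EuclideanSpace.equiv (Fin n) ℝ).symm.toContinuousLinearMap ∘L
    ContinuousLinearMap.pi fun j => EuclideanSpace.proj j.castSucc

@[simp]
theorem horizontalProj_apply (y : EuclideanSpace ℝ (Fin (n + 1))) (j : Fin n) :
    horizontalProj n y j = y j.castSucc :=
  rfl

/-- The inclusion `x' ↦ (x', 0)` of `ℝ^n` into `ℝ^{n+1}`, taken to be the adjoint of the
projection. -/
def horizontalIncl (n : ℕ) : EuclideanSpace ℝ (Fin n) →L[ℝ] EuclideanSpace ℝ (Fin (n + 1)) :=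
  (horizontalProj n).adjoint

theorem emb_eq_horizontalIncl_add (x : EuclideanSpace ℝ (Fin n)) (t : ℝ) :
    emb x t = horizontalIncl n x + t • EuclideanSpace.single (Fin.last n) 1 := by
  refine ext_inner_left ℝ fun y => ?_
  rw [inner_add_right, horizontalIncl, ContinuousLinearMap.adjoint_inner_right]
  simp [PiLp.inner_apply, Fin.sum_univ_castSucc, emb]

theorem horizontalIncl_single (j : Fin n) :
    horizontalIncl n (EuclideanSpace.single j 1) = EuclideanSpace.single j.castSucc 1 := by
  refine ext_inner_left ℝ fun y => ?_
  rw [horizontalIncl, ContinuousLinearMap.adjoint_inner_right]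
  simp [EuclideanSpace.inner_single_right]

theorem hasFDerivAt_emb (x : EuclideanSpace ℝ (Fin n)) (t : ℝ) :
    HasFDerivAt (fun z => emb z t) (horizontalIncl n) x := by
  simp only [emb_eq_horizontalIncl_add]
  exact (horizontalIncl n).hasFDerivAt.add_const _

theorem hasDerivAt_emb (x : EuclideanSpace ℝ (Fin n)) (t : ℝ) :
    HasDerivAt (emb x) (EuclideanSpace.single (Fin.last n) 1) t := by
  have h := ((hasDerivAt_id t).smul_const
    (EuclideanSpace.single (Fin.last n) (1 : ℝ))).const_add (horizontalIncl n x)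
  simpa [← emb_eq_horizontalIncl_add] using h

theorem continuous_emb : Continuous fun p : EuclideanSpace ℝ (Fin n) × ℝ => emb p.1 p.2 := by
  simp only [emb_eq_horizontalIncl_add]
  fun_prop

theorem contDiff_emb (t : ℝ) : ContDiff ℝ 1 fun z : EuclideanSpace ℝ (Fin n) => emb z t := by
  simp only [emb_eq_horizontalIncl_add]
  fun_prop

theorem gradient_comp_emb {v : EuclideanSpace ℝ (Fin (n + 1)) → ℝ}
    {x : EuclideanSpace ℝ (Fin n)} {t : ℝ} (hv : DifferentiableAt ℝ v (emb x t)) :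
    gradient (fun z => v (emb z t)) x = horizontalProj n (gradient v (emb x t)) := by
  refine ext_inner_right ℝ fun z => ?_
  rw [inner_gradient_left, ← ContinuousLinearMap.adjoint_inner_right, inner_gradient_left]
  exact congrArg (fun L => L z) (hv.hasFDerivAt.comp x (hasFDerivAt_emb x t)).fderiv

theorem norm_sq_eq_norm_horizontalProj_sq_add (y : EuclideanSpace ℝ (Fin (n + 1))) :
    ‖y‖ ^ 2 = ‖horizontalProj n y‖ ^ 2 + y (Fin.last n) ^ 2 := by
  simp [EuclideanSpace.real_norm_sq_eq, Fin.sum_univ_castSucc]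

theorem vdiv_emb_eq_add {G : EuclideanSpace ℝ (Fin (n + 1)) → EuclideanSpace ℝ (Fin (n + 1))}
    {x : EuclideanSpace ℝ (Fin n)} {t : ℝ} (hG : DifferentiableAt ℝ G (emb x t)) :
    vdiv G (emb x t) = vdiv (fun z => horizontalProj n (G (emb z t))) x
      + fderiv ℝ G (emb x t) (EuclideanSpace.single (Fin.last n) 1) (Fin.last n) := by
  have hslice : HasFDerivAt (fun z => horizontalProj n (G (emb z t)))
      (horizontalProj n ∘L fderiv ℝ G (emb x t) ∘L horizontalIncl n) x :=
    (horizontalProj n).hasFDerivAt.comp x (hG.hasFDerivAt.comp x (hasFDerivAt_emb x t))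
  rw [vdiv, vdiv, hslice.fderiv, Fin.sum_univ_castSucc]
  simp [horizontalIncl_single]

end Slices

section SliceIdentity

variable {n m : ℕ} {Ht : (Fin m → ℝ) → ℝ} {u : Fin m → EuclideanSpace ℝ (Fin (n + 1)) → ℝ}

/-- The horizontal part, on the slice `xₙ = t`, of the momentum density in the direction `xₙ`. -/
def sliceMomentum (u : Fin m → EuclideanSpace ℝ (Fin (n + 1)) → ℝ) (t : ℝ)
    (x : EuclideanSpace ℝ (Fin n)) : EuclideanSpace ℝ (Fin n) :=
  horizontalProj n (mcMomentum u (EuclideanSpace.single (Fin.last n) 1) (emb x t))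

theorem contDiff_sliceMomentum (hu : ∀ i, ContDiff ℝ 2 (u i)) (t : ℝ) :
    ContDiff ℝ 1 (sliceMomentum u t) :=
  (horizontalProj n).contDiff.comp ((contDiff_mcMomentum hu _).comp (contDiff_emb t))

theorem continuous_vdiv_sliceMomentum (hu : ∀ i, ContDiff ℝ 2 (u i)) :
    Continuous fun p : EuclideanSpace ℝ (Fin n) × ℝ => vdiv (sliceMomentum u p.2) p.1 := by
  have hG := contDiff_mcMomentum hu (EuclideanSpace.single (Fin.last n) 1)
  have hvdiv := (continuous_vdiv hG).comp continuous_emb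
  have hlast := ((hG.continuous_fderiv one_ne_zero).comp continuous_emb).clm_apply
    (continuous_const (y := EuclideanSpace.single (Fin.last n) (1 : ℝ)))
  refine (hvdiv.sub ((EuclideanSpace.proj (𝕜 := ℝ) (Fin.last n)).continuous.comp hlast)).congr
    fun p => ?_
  exact sub_eq_of_eq_add (vdiv_emb_eq_add (hG.differentiable one_ne_zero _))

theorem inner_sliceMomentum (hu : ∀ i, Differentiable ℝ (u i)) (t : ℝ)
    (x ν : EuclideanSpace ℝ (Fin n)) :
    ⟪sliceMomentum u t x, ν⟫ = ∑ i, ⟪gradient (fun y => u i (emb y t)) x, ν⟫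
      * fderiv ℝ (u i) (emb x t) (EuclideanSpace.single (Fin.last n) 1)
      / √(1 + ‖gradient (u i) (emb x t)‖ ^ 2) := by
  simp only [sliceMomentum, mcMomentum, mcFlux, map_sum, map_smul, sum_inner,
    real_inner_smul_left, gradient_comp_emb (hu _ _)]
  exact sum_congr rfl fun i _ => by ring

theorem mcIntegrand_eq_mcLagrangian_sub (hu : ∀ i, Differentiable ℝ (u i))
    (x : EuclideanSpace ℝ (Fin n)) (t : ℝ) :
    mcIntegrand Ht u x t = mcLagrangian Ht u (emb x t)
      - mcMomentum u (EuclideanSpace.single (Fin.last n) 1) (emb x t) (Fin.last n) - m := by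
  have hterm (i : Fin m) :
      (1 + ‖gradient (fun y => u i (emb y t)) x‖ ^ 2 - √(1 + ‖gradient (u i) (emb x t)‖ ^ 2))
        / √(1 + ‖gradient (u i) (emb x t)‖ ^ 2)
      = √(1 + ‖gradient (u i) (emb x t)‖ ^ 2)
        - fderiv ℝ (u i) (emb x t) (EuclideanSpace.single (Fin.last n) 1)
          * mcFlux (u i) (emb x t) (Fin.last n) - 1 := by
    have hlast : fderiv ℝ (u i) (emb x t) (EuclideanSpace.single (Fin.last n) 1)
        = gradient (u i) (emb x t) (Fin.last n) := by
      rw [← inner_gradient_left, EuclideanSpace.inner_single_right]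
      simp
    have hsplit := norm_sq_eq_norm_horizontalProj_sq_add (gradient (u i) (emb x t))
    have hsq : √(1 + ‖gradient (u i) (emb x t)‖ ^ 2) ^ 2 = _ := Real.sq_sqrt (by positivity)
    have := sqrt_one_add_norm_gradient_sq_pos (u i) (emb x t)
    rw [gradient_comp_emb (hu i _), hlast, mcFlux, PiLp.smul_apply, smul_eq_mul]
    field_simp
    linear_combination -hsplit - hsq
  simp only [mcIntegrand, mcLagrangian, mcMomentum, hterm]
  simp only [sum_sub_distrib, sum_const, card_univ, Fintype.card_fin, nsmul_eq_mul, mul_one,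
    WithLp.ofLp_sum, WithLp.ofLp_smul, Finset.sum_apply, Pi.smul_apply, smul_eq_mul]
  ring

theorem hasDerivAt_mcIntegrand (hHt : Differentiable ℝ Ht) (hu : ∀ i, ContDiff ℝ 2 (u i))
    (hsol : ∀ i x, -vdiv (mcFlux (u i)) x = fderiv ℝ Ht (fun j => u j x) (Pi.single i 1))
    (x : EuclideanSpace ℝ (Fin n)) (t : ℝ) :
    HasDerivAt (mcIntegrand Ht u x) (vdiv (sliceMomentum u t) x) t := by
  have hmom := (contDiff_mcMomentum hu
    (EuclideanSpace.single (Fin.last n) 1)).differentiable one_ne_zero (emb x t)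
  have hlast := (EuclideanSpace.proj (𝕜 := ℝ) (Fin.last n)).hasFDerivAt.comp_hasDerivAt t
    (hmom.hasFDerivAt.comp_hasDerivAt t (hasDerivAt_emb x t))
  have hlag := (hasFDerivAt_mcLagrangian hHt hu
    (emb x t)).differentiableAt.hasFDerivAt.comp_hasDerivAt t (hasDerivAt_emb x t)
  rw [funext (mcIntegrand_eq_mcLagrangian_sub (fun i => (hu i).differentiable two_ne_zero) x)]
  refine ((hlag.sub hlast).sub_const (m : ℝ)).congr_deriv ?_
  rw [← vdiv_mcMomentum hHt hu hsol, vdiv_emb_eq_add hmom]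
  exact add_sub_cancel_right _ _

end SliceIdentity

section FundamentalTheorem

theorem intervalIntegral_setIntegral_eq_sub {X : Type*} [TopologicalSpace X] [T2Space X]
    [SecondCountableTopology X] [MeasurableSpace X] [OpensMeasurableSpace X] {μ : Measure X}
    [SFinite μ] [IsFiniteMeasureOnCompacts μ] {K : Set X} (hK : IsCompact (closure K))
    {f f' : X → ℝ → ℝ} (hf : ∀ x s, HasDerivAt (f x) (f' x s) s)
    (hf' : Continuous fun p : X × ℝ => f' p.1 p.2) {a b : ℝ}
    (ha : IntegrableOn (fun x => f x a) K μ) (hb : IntegrableOn (fun x => f x b) K μ) :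
    ∫ s in a..b, ∫ x in K, f' x s ∂μ = (∫ x in K, f x b ∂μ) - ∫ x in K, f x a ∂μ := by
  have hint : IntegrableOn (fun p : ℝ × X => f' p.2 p.1) (Set.uIoc a b ×ˢ K)
      (volume.prod μ) :=
    ((hf'.comp continuous_swap).continuousOn.integrableOn_compact
      (isCompact_uIcc.prod hK)).mono_set (Set.prod_mono Set.uIoc_subset_uIcc subset_closure)
  rw [IntegrableOn, ← Measure.prod_restrict] at hint
  rw [intervalIntegral_integral_swap (f := fun s x => f' x s) hint, ← integral_sub hb ha]
  congr 1 with x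
  exact intervalIntegral.integral_eq_sub_of_hasDerivAt (fun s _ => hf x s)
    ((hf'.comp (Continuous.prodMk_right x)).intervalIntegrable a b)

end FundamentalTheorem

section HamiltonianIdentity

variable {n m : ℕ} {Ht : (Fin m → ℝ) → ℝ} {u : Fin m → EuclideanSpace ℝ (Fin (n + 1)) → ℝ}

theorem intervalIntegral_setIntegral_vdiv_sliceMomentum (hHt : Differentiable ℝ Ht)
    (hu : ∀ i, ContDiff ℝ 2 (u i))
    (hsol : ∀ i x, -vdiv (mcFlux (u i)) x = fderiv ℝ Ht (fun j => u j x) (Pi.single i 1))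
    (hint : ∀ t, Integrable fun x : EuclideanSpace ℝ (Fin n) => mcIntegrand Ht u x t) (R t : ℝ) :
    ∫ s in (0 : ℝ)..t, ∫ x in ball 0 R, vdiv (sliceMomentum u s) x
      = (∫ x in ball 0 R, mcIntegrand Ht u x t) - ∫ x in ball 0 R, mcIntegrand Ht u x 0 :=
  intervalIntegral_setIntegral_eq_sub
    ((isCompact_closedBall 0 R).of_isClosed_subset isClosed_closure closure_ball_subset_closedBall)
    (hasDerivAt_mcIntegrand hHt hu hsol) (continuous_vdiv_sliceMomentum hu)
    (hint 0).integrableOn (hint t).integrableOn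

end HamiltonianIdentity

theorem hamiltonian_identity_mean_curvature_general
    {n m : ℕ} {Ht : (Fin m → ℝ) → ℝ} (hHt : Differentiable ℝ Ht)
    {u : Fin m → EuclideanSpace ℝ (Fin (n + 1)) → ℝ} (hu : ∀ i, ContDiff ℝ 2 (u i))
    (hsol : ∀ i x, -vdiv (mcFlux (u i)) x = fderiv ℝ Ht (fun j => u j x) (Pi.single i 1))
    (hint : ∀ t : ℝ, Integrable fun x' : EuclideanSpace ℝ (Fin n) => mcIntegrand Ht u x' t)
    (hbdry : ∀ t : ℝ, ∃ R : ℕ → ℝ, Tendsto R atTop atTop ∧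
      Tendsto (fun k => ∫ s in (0 : ℝ)..t,
          ∫ x' in sphere (0 : EuclideanSpace ℝ (Fin n)) (R k),
            ∑ i, ⟪gradient (fun y => u i (emb y s)) x', ‖x'‖⁻¹ • x'⟫
              * fderiv ℝ (u i) (emb x' s) (EuclideanSpace.single (Fin.last n) 1)
              / √(1 + ‖gradient (u i) (emb x' s)‖ ^ 2)
            ∂μH[(n : ℝ) - 1]) atTop (𝓝 0)) (t : ℝ) :
    ∫ x' : EuclideanSpace ℝ (Fin n), mcIntegrand Ht u x' t
      = ∫ x' : EuclideanSpace ℝ (Fin n), mcIntegrand Ht u x' 0 := by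
  obtain ⟨c, hc⟩ := exists_setIntegral_ball_vdiv_eq_mul n
  obtain ⟨R, hR, hflux⟩ := hbdry t
  have hball (s : ℝ) := (aecover_ball (μ := volume) (x := (0 : EuclideanSpace ℝ (Fin n)))
    hR).integral_tendsto_of_countably_generated (hint s)
  refine sub_eq_zero.1 (tendsto_nhds_unique (((hball t).sub (hball 0)).congr' ?_)
    (by simpa only [mul_zero] using hflux.const_mul c))
  filter_upwards [hR.eventually_gt_atTop 0] with k hk
  rw [← intervalIntegral_setIntegral_vdiv_sliceMomentum hHt hu hsol hint,
    ← intervalIntegral.integral_const_mul]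
  simp only [hc _ (contDiff_sliceMomentum hu _) _ hk,
    inner_sliceMomentum fun i => (hu i).differentiable two_ne_zero]

/-- **Hamiltonian identity for the prescribed mean curvature system**
`-div(∇uᵢ/√(1+|∇uᵢ|²)) = Hᵢ(u)` on `ℝ^{n+1}`: under the stated integrability,
differentiation-under-the-integral and vanishing-boundary-term assumptions,
`∫_{ℝⁿ} ( ∑ᵢ (1 + |∇_{x'}uᵢ|² - √(1+|∇uᵢ|²))/√(1+|∇uᵢ|²) - H̃(u) ) dx'`
is independent of `x_n`. -/
theorem hamiltonian_identity_mean_curvature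
    (n m : ℕ) (hm : 1 ≤ m)
    (H : Fin m → (Fin m → ℝ) → ℝ) (hH : ∀ i, ContDiff ℝ 1 (H i))
    (Ht : (Fin m → ℝ) → ℝ) (hHt : ContDiff ℝ 2 Ht)
    (hHtgrad : ∀ i y, fderiv ℝ Ht y (Pi.single i 1) = H i y)
    (u : Fin m → EuclideanSpace ℝ (Fin (n + 1)) → ℝ)
    (hu : ∀ i, ContDiff ℝ 2 (u i))
    (hsol : ∀ i x, -vdiv (fun y =>
        (Real.sqrt (1 + ‖gradient (u i) y‖ ^ 2))⁻¹ • gradient (u i) y) x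
        = H i (fun j => u j x))
    -- (i) integrability of the integrand on every horizontal slice
    (hint : ∀ t : ℝ, Integrable (fun x' : EuclideanSpace ℝ (Fin n) => mcIntegrand Ht u x' t))
    -- (ii) differentiation under the integral sign is justified on every ball
    (hdiff : ∀ R : ℝ, 0 < R → ∀ t : ℝ,
      HasDerivAt (fun s : ℝ => ∫ x' in ball (0 : EuclideanSpace ℝ (Fin n)) R,
          mcIntegrand Ht u x' s)
        (∫ x' in ball (0 : EuclideanSpace ℝ (Fin n)) R,
          deriv (fun s : ℝ => mcIntegrand Ht u x' s) t) t)
    -- (iii) the boundary terms vanish along a sequence of radii tending to infinity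
    (hbdry : ∀ t : ℝ, ∃ R : ℕ → ℝ, Tendsto R atTop atTop ∧
      Tendsto (fun k => ∫ s in (0 : ℝ)..t,
          ∫ x' in sphere (0 : EuclideanSpace ℝ (Fin n)) (R k),
            ∑ i, ⟪gradient (fun y => u i (emb y s)) x', ‖x'‖⁻¹ • x'⟫
              * fderiv ℝ (u i) (emb x' s) (EuclideanSpace.single (Fin.last n) 1)
              / Real.sqrt (1 + ‖gradient (u i) (emb x' s)‖ ^ 2)
            ∂μH[(n : ℝ) - 1]) atTop (nhds 0)) :
    ∀ t : ℝ, (∫ x' : EuclideanSpace ℝ (Fin n), mcIntegrand Ht u x' t)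
      = ∫ x' : EuclideanSpace ℝ (Fin n), mcIntegrand Ht u x' 0 :=
  hamiltonian_identity_mean_curvature_general (hHt.differentiable two_ne_zero) hu
    (fun i x => (hsol i x).trans (hHtgrad i _).symm) hint hbdry
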